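/- Second conditional Ingleton inequality [2cI]: let ξ_X, ξ_Y, ξ_Z, ξ_U be discrete random variables with nonempty finite ranges on a common probability space, and let h be the entropy function assigning to each subset S of {X, Y, Z, U} the Shannon entropy of the joint distribution of (ξ_i)_{i∈S}. If ξ_X ⊥ ξ_Y | ξ_Z and ξ_Y ⊥ ξ_U | ξ_Z, then □h(X,Y) ≥ 0. -/

import Mathlib

open MeasureTheory

/-- The probability that the discrete random variable `f` takes the value `x`. -/
noncomputable def probOf {Ω S : Type*} [MeasurableSpace Ω] (μ : Measure Ω)
    (f : Ω → S) (x : S) : ℝ :=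
  (μ {ω | f ω = x}).toReal

/-- The Shannon entropy `−Σ_x p(x)·ln p(x)` of the distribution of a discrete
random variable `f` with finite range `S`. -/
noncomputable def entropyOf {Ω S : Type*} [MeasurableSpace Ω] [Fintype S]
    (μ : Measure Ω) (f : Ω → S) : ℝ :=
  ∑ x : S, Real.negMulLog (probOf μ f x)

/-- Conditional independence of discrete random variables:
`P(f = a, g = b, k = c) · P(k = c) = P(f = a, k = c) · P(g = b, k = c)` for all values. -/
def CondIndepRV {Ω A B C : Type*} [MeasurableSpace Ω] (μ : Measure Ω)
    (f : Ω → A) (g : Ω → B) (k : Ω → C) : Prop :=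
  ∀ (a : A) (b : B) (c : C),
    μ {ω | f ω = a ∧ g ω = b ∧ k ω = c} * μ {ω | k ω = c} =
    μ {ω | f ω = a ∧ k ω = c} * μ {ω | g ω = b ∧ k ω = c}

/-- Unconditional independence: the case of a constant conditioning variable. -/
def IndepRV {Ω A B : Type*} [MeasurableSpace Ω] (μ : Measure Ω)
    (f : Ω → A) (g : Ω → B) : Prop :=
  CondIndepRV μ f g (fun _ => ())

/-- The Ingleton expression □h(X,Y) for the entropy function `h` of the four
discrete random variables `ξX, ξY, ξZ, ξU` (entropies of joint sub-vectors). -/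
noncomputable def ingletonEnt {Ω SX SY SZ SU : Type*} [MeasurableSpace Ω]
    [Fintype SX] [Fintype SY] [Fintype SZ] [Fintype SU] (μ : Measure Ω)
    (ξX : Ω → SX) (ξY : Ω → SY) (ξZ : Ω → SZ) (ξU : Ω → SU) : ℝ :=
  - entropyOf μ (fun ω => (ξX ω, ξY ω)) + entropyOf μ (fun ω => (ξX ω, ξZ ω))
  + entropyOf μ (fun ω => (ξX ω, ξU ω)) + entropyOf μ (fun ω => (ξY ω, ξZ ω))
  + entropyOf μ (fun ω => (ξY ω, ξU ω)) + entropyOf μ (fun ω => (ξZ ω, ξU ω))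
  - entropyOf μ ξZ - entropyOf μ ξU
  - entropyOf μ (fun ω => (ξX ω, ξZ ω, ξU ω)) - entropyOf μ (fun ω => (ξY ω, ξZ ω, ξU ω))

open scoped Classical in
/-- The distribution of `f` is the image under `F` of the weight `q`. -/
def IsMarginal {Ω S T : Type*} [MeasurableSpace Ω] [Fintype T] (μ : Measure Ω)
    (q : T → ℝ) (f : Ω → S) (F : T → S) : Prop :=
  ∀ s, probOf μ f s = ∑ t, if F t = s then q t else 0

section

variable {Ω : Type*} [MeasurableSpace Ω] {μ : Measure Ω}

theorem probOf_nonneg {S : Type*} (f : Ω → S) (s : S) : 0 ≤ probOf μ f s :=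
  ENNReal.toReal_nonneg

open scoped Classical in
theorem probOf_comp [IsFiniteMeasure μ] {A B : Type*} [Fintype A] [MeasurableSpace A]
    [MeasurableSingletonClass A] {f : Ω → A} (hf : Measurable f) (g : A → B) (b : B) :
    probOf μ (fun ω => g (f ω)) b = ∑ a, if g a = b then probOf μ f a else 0 := by
  have h := sum_measureReal_preimage_singleton (μ := μ) (f := f)
    (Finset.univ.filter fun a => g a = b) (fun a _ => hf (measurableSet_singleton a))
  rw [← Finset.sum_filter]
  change μ.real _ = ∑ a ∈ _, μ.real (f ⁻¹' {a})
  rw [h]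
  congr 1
  ext ω
  simp

theorem probOf_le_comp [IsFiniteMeasure μ] {A B : Type*} (f : Ω → A) (g : A → B) (a : A) :
    probOf μ f a ≤ probOf μ (fun ω => g (f ω)) (g a) :=
  measureReal_mono fun _ hω => congrArg g hω

theorem sum_probOf_pair [IsFiniteMeasure μ] {A B : Type*} [Fintype A] [Fintype B]
    [MeasurableSpace A] [MeasurableSingletonClass A]
    [MeasurableSpace B] [MeasurableSingletonClass B] {f : Ω → A} {g : Ω → B}
    (hf : Measurable f) (hg : Measurable g) (a : A) :
    ∑ b, probOf μ (fun ω => (f ω, g ω)) (a, b) = probOf μ f a := by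
  classical
  have h := probOf_comp (μ := μ) (hf.prodMk hg) Prod.fst a
  rw [h, Fintype.sum_prod_type, Finset.sum_eq_single a] <;> simp +contextual

theorem sum_probOf [IsProbabilityMeasure μ] {A : Type*} [Fintype A]
    [MeasurableSpace A] [MeasurableSingletonClass A] {f : Ω → A} (hf : Measurable f) :
    ∑ a, probOf μ f a = 1 := by
  have h := probOf_comp (μ := μ) hf (fun _ => ()) ()
  simpa [probOf] using h.symm

theorem probOf_comp_injective {A B : Type*} (f : Ω → A) {g : A → B}
    (hg : Function.Injective g) (a : A) :
    probOf μ (fun ω => g (f ω)) (g a) = probOf μ f a := by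
  simp [probOf, hg.eq_iff]

theorem CondIndepRV.probOf_mul {A B C : Type*} {f : Ω → A} {g : Ω → B} {k : Ω → C}
    (h : CondIndepRV μ f g k) (a : A) (b : B) (c : C) :
    probOf μ (fun ω => (f ω, g ω, k ω)) (a, b, c) * probOf μ k c =
      probOf μ (fun ω => (f ω, k ω)) (a, c) * probOf μ (fun ω => (g ω, k ω)) (b, c) := by
  simpa [probOf] using congrArg ENNReal.toReal (h a b c)

theorem CondIndepRV.probOf_mul_swap {A B C : Type*} {f : Ω → A} {g : Ω → B} {k : Ω → C}
    (h : CondIndepRV μ f g k) (a : A) (c : C) (b : B) :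
    probOf μ (fun ω => (f ω, k ω, g ω)) (a, c, b) * probOf μ k c =
      probOf μ (fun ω => (f ω, k ω)) (a, c) * probOf μ (fun ω => (k ω, g ω)) (c, b) := by
  have hgk := probOf_comp_injective (μ := μ) (fun ω => (k ω, g ω)) Prod.swap_injective (c, b)
  have hfgk := probOf_comp_injective (μ := μ) (fun ω => (f ω, k ω, g ω))
    (Function.injective_id.prodMap Prod.swap_injective) (a, c, b)
  rw [← hgk, ← hfgk]
  exact h.probOf_mul a b c

namespace IsMarginal

variable {S T : Type*} [Fintype T] {q : T → ℝ} {f : Ω → S} {F : T → S}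

theorem comp [IsFiniteMeasure μ] [Fintype S] [MeasurableSpace S] [MeasurableSingletonClass S]
    (h : IsMarginal μ q f F) (hf : Measurable f) {B : Type*} (g : S → B) :
    IsMarginal μ q (fun ω => g (f ω)) (fun t => g (F t)) := by
  classical
  intro b
  rw [probOf_comp hf]
  calc _ = ∑ a, ∑ t, if F t = a then (if g a = b then q t else 0) else 0 := by
        refine Finset.sum_congr rfl fun a _ => ?_
        rw [h a]
        split_ifs <;> simp
    _ = _ := by
        rw [Finset.sum_comm]
        refine Finset.sum_congr rfl fun t _ => ?_
        simp

theorem entropyOf_eq [Fintype S] (h : IsMarginal μ q f F) :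
    entropyOf μ f = -∑ t, q t * Real.log (probOf μ f (F t)) := by
  classical
  calc entropyOf μ f
      = ∑ s, ∑ t, if F t = s then -(q t * Real.log (probOf μ f s)) else 0 := by
        refine Finset.sum_congr rfl fun s _ => ?_
        rw [Real.negMulLog, neg_mul]
        nth_rewrite 1 [h s]
        rw [Finset.sum_mul, ← Finset.sum_neg_distrib]
        refine Finset.sum_congr rfl fun t _ => ?_
        split_ifs <;> simp
    _ = _ := by
        rw [Finset.sum_comm, ← Finset.sum_neg_distrib]
        refine Finset.sum_congr rfl fun t _ => ?_
        simp

theorem le_probOf (h : IsMarginal μ q f F) (hq : ∀ t, 0 ≤ q t) (t : T) :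
    q t ≤ probOf μ f (F t) := by
  classical
  rw [h]
  refine le_trans (by simp) (Finset.single_le_sum (fun t' _ => ?_) (Finset.mem_univ t))
  split_ifs
  exacts [hq t', le_rfl]

theorem sum_eq_one [IsProbabilityMeasure μ] [Fintype S] [MeasurableSpace S]
    [MeasurableSingletonClass S] (h : IsMarginal μ q f F) (hf : Measurable f) :
    ∑ t, q t = 1 := by
  have h' := h.comp hf (fun _ => ()) ()
  simpa [probOf] using h'.symm

end IsMarginal

end

/-- If `X` and `Y`, and `Y` and `U`, are conditionally independent given `Z`, then the joint
distribution making `Y` conditionally independent of `(X, U)` given `Z` has the original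
marginals on `(X, Z, U)`, `(X, Y, Z)` and `(Y, Z, U)`. -/
theorem exists_isMarginal_of_condIndepRV
    {Ω : Type*} [MeasurableSpace Ω] {μ : Measure Ω} [IsProbabilityMeasure μ]
    {SX SY SZ SU : Type*}
    [Fintype SX] [MeasurableSpace SX] [MeasurableSingletonClass SX]
    [Fintype SY] [MeasurableSpace SY] [MeasurableSingletonClass SY]
    [Fintype SZ] [MeasurableSpace SZ] [MeasurableSingletonClass SZ]
    [Fintype SU] [MeasurableSpace SU] [MeasurableSingletonClass SU]
    {ξX : Ω → SX} {ξY : Ω → SY} {ξZ : Ω → SZ} {ξU : Ω → SU}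
    (mX : Measurable ξX) (mY : Measurable ξY) (mZ : Measurable ξZ) (mU : Measurable ξU)
    (h1 : CondIndepRV μ ξX ξY ξZ) (h2 : CondIndepRV μ ξY ξU ξZ) :
    ∃ q : SX × SY × SZ × SU → ℝ,
      (∀ x y z u, q (x, y, z, u) = probOf μ (fun ω => (ξX ω, ξZ ω, ξU ω)) (x, z, u) *
        probOf μ (fun ω => (ξY ω, ξZ ω)) (y, z) / probOf μ ξZ z) ∧
      IsMarginal μ q (fun ω => (ξX ω, ξZ ω, ξU ω)) (fun t => (t.1, t.2.2.1, t.2.2.2)) ∧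
      IsMarginal μ q (fun ω => (ξX ω, ξY ω, ξZ ω)) (fun t => (t.1, t.2.1, t.2.2.1)) ∧
      IsMarginal μ q (fun ω => (ξY ω, ξZ ω, ξU ω)) (fun t => (t.2.1, t.2.2.1, t.2.2.2)) := by
  classical
  have hZY : ∀ z, ∑ y, probOf μ (fun ω => (ξY ω, ξZ ω)) (y, z) = probOf μ ξZ z := fun z => by
    rw [← sum_probOf_pair mZ mY z]
    exact Finset.sum_congr rfl fun y _ =>
      probOf_comp_injective (fun ω => (ξZ ω, ξY ω)) Prod.swap_injective (z, y)
  have hXZU : ∀ x z, ∑ u, probOf μ (fun ω => (ξX ω, ξZ ω, ξU ω)) (x, z, u) =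
      probOf μ (fun ω => (ξX ω, ξZ ω)) (x, z) := fun x z => by
    rw [← sum_probOf_pair (mX.prodMk mZ) mU (x, z)]
    exact Finset.sum_congr rfl fun u _ => probOf_comp_injective
      (fun ω => ((ξX ω, ξZ ω), ξU ω)) (Equiv.prodAssoc SX SZ SU).injective ((x, z), u)
  have hZUX : ∀ z u, ∑ x, probOf μ (fun ω => (ξX ω, ξZ ω, ξU ω)) (x, z, u) =
      probOf μ (fun ω => (ξZ ω, ξU ω)) (z, u) := fun z u => by
    rw [← sum_probOf_pair (mZ.prodMk mU) mX (z, u)]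
    exact Finset.sum_congr rfl fun x _ => probOf_comp_injective
      (fun ω => ((ξZ ω, ξU ω), ξX ω)) Prod.swap_injective ((z, u), x)
  refine ⟨fun t => probOf μ (fun ω => (ξX ω, ξZ ω, ξU ω)) (t.1, t.2.2.1, t.2.2.2) *
        probOf μ (fun ω => (ξY ω, ξZ ω)) (t.2.1, t.2.2.1) / probOf μ ξZ t.2.2.1,
      fun _ _ _ _ => rfl, ?_, ?_, ?_⟩
  · rintro ⟨x, z, u⟩
    have hle := probOf_le_comp (μ := μ) (fun ω => (ξX ω, ξZ ω, ξU ω)) (fun s => s.2.1) (x, z, u)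
    simp only [Fintype.sum_prod_type, Prod.mk.injEq, ite_and, Finset.sum_ite_irrel,
      Finset.sum_ite_eq', Finset.sum_const_zero, Finset.mem_univ, if_true]
    rw [← Finset.sum_div, ← Finset.mul_sum, hZY]
    rcases eq_or_ne (probOf μ ξZ z) 0 with h0 | h0
    · rw [h0, div_zero]
      exact le_antisymm (hle.trans h0.le) (probOf_nonneg _ _)
    · rw [mul_div_cancel_right₀ _ h0]
  · rintro ⟨x, y, z⟩
    have hle := probOf_le_comp (μ := μ) (fun ω => (ξX ω, ξY ω, ξZ ω)) (fun s => s.2.2) (x, y, z)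
    simp only [Fintype.sum_prod_type, Prod.mk.injEq, ite_and, Finset.sum_ite_irrel,
      Finset.sum_ite_eq', Finset.sum_const_zero, Finset.mem_univ, if_true]
    rw [← Finset.sum_div, ← Finset.sum_mul, hXZU, ← h1.probOf_mul]
    rcases eq_or_ne (probOf μ ξZ z) 0 with h0 | h0
    · rw [h0, div_zero]
      exact le_antisymm (hle.trans h0.le) (probOf_nonneg _ _)
    · rw [mul_div_cancel_right₀ _ h0]
  · rintro ⟨y, z, u⟩
    have hle := probOf_le_comp (μ := μ) (fun ω => (ξY ω, ξZ ω, ξU ω)) (fun s => s.2.1) (y, z, u)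
    simp only [Fintype.sum_prod_type, Prod.mk.injEq, ite_and, Finset.sum_ite_irrel,
      Finset.sum_ite_eq', Finset.sum_const_zero, Finset.mem_univ, if_true]
    rw [← Finset.sum_div, ← Finset.sum_mul, hZUX, mul_comm, ← h2.probOf_mul_swap]
    rcases eq_or_ne (probOf μ ξZ z) 0 with h0 | h0
    · rw [h0, div_zero]
      exact le_antisymm (hle.trans h0.le) (probOf_nonneg _ _)
    · rw [mul_div_cancel_right₀ _ h0]

/-- Statement: the second conditional Ingleton inequality. -/
theorem conditional_ingleton_2cI
    {Ω : Type*} [MeasurableSpace Ω] (μ : Measure Ω) [IsProbabilityMeasure μ]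
    {SX SY SZ SU : Type*}
    [Fintype SX] [Nonempty SX] [MeasurableSpace SX] [MeasurableSingletonClass SX]
    [Fintype SY] [Nonempty SY] [MeasurableSpace SY] [MeasurableSingletonClass SY]
    [Fintype SZ] [Nonempty SZ] [MeasurableSpace SZ] [MeasurableSingletonClass SZ]
    [Fintype SU] [Nonempty SU] [MeasurableSpace SU] [MeasurableSingletonClass SU]
    (ξX : Ω → SX) (ξY : Ω → SY) (ξZ : Ω → SZ) (ξU : Ω → SU)
    (mX : Measurable ξX) (mY : Measurable ξY) (mZ : Measurable ξZ) (mU : Measurable ξU)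
    (h1 : CondIndepRV μ ξX ξY ξZ) (h2 : CondIndepRV μ ξY ξU ξZ) :
    0 ≤ ingletonEnt μ ξX ξY ξZ ξU := by
  obtain ⟨q, hq, hXZU, hXYZ, hYZU⟩ := exists_isMarginal_of_condIndepRV mX mY mZ mU h1 h2
  have hXY := hXYZ.comp (mX.prodMk (mY.prodMk mZ)) fun s => (s.1, s.2.1)
  have hXZ := hXZU.comp (mX.prodMk (mZ.prodMk mU)) fun s => (s.1, s.2.1)
  have hXU := hXZU.comp (mX.prodMk (mZ.prodMk mU)) fun s => (s.1, s.2.2)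
  have hYZ := hYZU.comp (mY.prodMk (mZ.prodMk mU)) fun s => (s.1, s.2.1)
  have hYU := hYZU.comp (mY.prodMk (mZ.prodMk mU)) fun s => (s.1, s.2.2)
  have hZU := hYZU.comp (mY.prodMk (mZ.prodMk mU)) fun s => (s.2.1, s.2.2)
  have hZ := hYZU.comp (mY.prodMk (mZ.prodMk mU)) fun s => s.2.1
  have hU := hYZU.comp (mY.prodMk (mZ.prodMk mU)) fun s => s.2.2
  dsimp only at hXY hXZ hXU hYZ hYU hZU hZ hU
  have hq0 : ∀ t, 0 ≤ q t := fun ⟨x, y, z, u⟩ => by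
    rw [hq]
    exact div_nonneg (mul_nonneg (probOf_nonneg _ _) (probOf_nonneg _ _)) (probOf_nonneg _ _)
  have hq1 := hU.sum_eq_one mU
  let W : SX × SY × SZ × SU → ℝ := fun t =>
    probOf μ (fun ω => (ξX ω, ξY ω, ξZ ω)) (t.1, t.2.1, t.2.2.1) *
      (probOf μ (fun ω => (ξX ω, ξU ω)) (t.1, t.2.2.2) *
        probOf μ (fun ω => (ξY ω, ξU ω)) (t.2.1, t.2.2.2) /
      (probOf μ (fun ω => (ξX ω, ξY ω)) (t.1, t.2.1) * probOf μ ξU t.2.2.2))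
  have hW0 : ∀ t, 0 ≤ W t := fun t =>
    mul_nonneg (probOf_nonneg _ _) (div_nonneg
      (mul_nonneg (probOf_nonneg _ _) (probOf_nonneg _ _))
      (mul_nonneg (probOf_nonneg _ _) (probOf_nonneg _ _)))
  have hW1 : ∑ t, W t ≤ 1 := by
    have hXYsum : ∀ x y, ∑ z, probOf μ (fun ω => (ξX ω, ξY ω, ξZ ω)) (x, y, z) =
        probOf μ (fun ω => (ξX ω, ξY ω)) (x, y) := fun x y => by
      rw [← sum_probOf_pair (mX.prodMk mY) mZ (x, y)]
      exact Finset.sum_congr rfl fun z _ => probOf_comp_injective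
        (fun ω => ((ξX ω, ξY ω), ξZ ω)) (Equiv.prodAssoc SX SY SZ).injective ((x, y), z)
    have hUsum : ∀ u, ∑ y, probOf μ (fun ω => (ξY ω, ξU ω)) (y, u) = probOf μ ξU u := fun u => by
      rw [← sum_probOf_pair mU mY u]
      exact Finset.sum_congr rfl fun y _ =>
        probOf_comp_injective (fun ω => (ξU ω, ξY ω)) Prod.swap_injective (u, y)
    calc ∑ t, W t
        = ∑ x, ∑ y, ∑ u, probOf μ (fun ω => (ξX ω, ξY ω)) (x, y) *
            (probOf μ (fun ω => (ξX ω, ξU ω)) (x, u) *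
              probOf μ (fun ω => (ξY ω, ξU ω)) (y, u) /
            (probOf μ (fun ω => (ξX ω, ξY ω)) (x, y) * probOf μ ξU u)) := by
          simp only [Fintype.sum_prod_type, W]
          refine Finset.sum_congr rfl fun x _ => Finset.sum_congr rfl fun y _ => ?_
          rw [Finset.sum_comm]
          simp only [← Finset.sum_mul, hXYsum]
      _ ≤ ∑ x, ∑ y, ∑ u, probOf μ (fun ω => (ξX ω, ξU ω)) (x, u) *
            probOf μ (fun ω => (ξY ω, ξU ω)) (y, u) / probOf μ ξU u := by
          gcongr with x _ y _ u _
          rw [← div_div, div_right_comm, mul_div_left_comm]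
          exact mul_le_of_le_one_right (div_nonneg (mul_nonneg (probOf_nonneg _ _)
            (probOf_nonneg _ _)) (probOf_nonneg _ _)) (div_self_le_one _)
      _ = ∑ x, ∑ u, probOf μ (fun ω => (ξX ω, ξU ω)) (x, u) *
            probOf μ ξU u / probOf μ ξU u := by
          refine Finset.sum_congr rfl fun x _ => ?_
          rw [Finset.sum_comm]
          simp only [← Finset.sum_div, ← Finset.mul_sum, hUsum]
      _ ≤ ∑ x, ∑ u, probOf μ (fun ω => (ξX ω, ξU ω)) (x, u) := by
          gcongr with x _ u _
          rw [mul_div_assoc]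
          exact mul_le_of_le_one_right (probOf_nonneg _ _) (div_self_le_one _)
      _ = 1 := by
          rw [← Fintype.sum_prod_type', sum_probOf (mX.prodMk mU)]
  rw [ingletonEnt, hXY.entropyOf_eq, hXZ.entropyOf_eq, hXU.entropyOf_eq, hYZ.entropyOf_eq,
    hYU.entropyOf_eq, hZU.entropyOf_eq, hZ.entropyOf_eq, hU.entropyOf_eq, hXZU.entropyOf_eq,
    hYZU.entropyOf_eq]
  simp only [← Finset.sum_neg_distrib, ← Finset.sum_add_distrib, ← Finset.sum_sub_distrib]
  suffices h : ∑ t, (q t - W t) ≤ _ from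
    le_trans (by rw [Finset.sum_sub_distrib]; linarith) h
  refine Finset.sum_le_sum fun t _ => ?_
  rcases (hq0 t).eq_or_lt with h0 | hpos
  · simpa [← h0] using hW0 t
  have pXY := hpos.trans_le (hXY.le_probOf hq0 t)
  have pXZ := hpos.trans_le (hXZ.le_probOf hq0 t)
  have pXU := hpos.trans_le (hXU.le_probOf hq0 t)
  have pYZ := hpos.trans_le (hYZ.le_probOf hq0 t)
  have pYU := hpos.trans_le (hYU.le_probOf hq0 t)
  have pZU := hpos.trans_le (hZU.le_probOf hq0 t)
  have pZ := hpos.trans_le (hZ.le_probOf hq0 t)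
  have pU := hpos.trans_le (hU.le_probOf hq0 t)
  have pXZU := hpos.trans_le (hXZU.le_probOf hq0 t)
  have pYZU := hpos.trans_le (hYZU.le_probOf hq0 t)
  obtain ⟨x, y, z, u⟩ := t
  have e1 := h1.probOf_mul x y z
  have e2 := h2.probOf_mul_swap y z u
  have hqt := hq x y z u
  dsimp only [W] at *
  generalize probOf μ (fun ω => (ξX ω, ξY ω)) (x, y) = aXY at *
  generalize probOf μ (fun ω => (ξX ω, ξZ ω)) (x, z) = aXZ at *
  generalize probOf μ (fun ω => (ξX ω, ξU ω)) (x, u) = aXU at *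
  generalize probOf μ (fun ω => (ξY ω, ξZ ω)) (y, z) = aYZ at *
  generalize probOf μ (fun ω => (ξY ω, ξU ω)) (y, u) = aYU at *
  generalize probOf μ (fun ω => (ξZ ω, ξU ω)) (z, u) = aZU at *
  generalize probOf μ (fun ω => (ξX ω, ξY ω, ξZ ω)) (x, y, z) = aXYZ at *
  generalize probOf μ (fun ω => (ξX ω, ξZ ω, ξU ω)) (x, z, u) = aXZU at *
  generalize probOf μ (fun ω => (ξY ω, ξZ ω, ξU ω)) (y, z, u) = aYZU at *
  generalize probOf μ ξZ z = aZ at *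
  generalize probOf μ ξU u = aU at *
  have hYZU_log : Real.log aYZU + Real.log aZ = Real.log aYZ + Real.log aZU := by
    rw [← Real.log_mul pYZU.ne' pZ.ne', e2, Real.log_mul pYZ.ne' pZU.ne']
  have hR : aXYZ * (aXU * aYU / (aXY * aU)) =
      q (x, y, z, u) * (aXZ * aXU * aYU / (aXY * aU * aXZU)) := by
    rw [eq_div_of_mul_eq pZ.ne' e1, hqt]
    field_simp
  have hlog := mul_le_mul_of_nonneg_left (Real.log_le_sub_one_of_pos
    (show 0 < aXZ * aXU * aYU / (aXY * aU * aXZU) by positivity)) hpos.le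
  rw [mul_sub, ← hR, mul_one, Real.log_div (by positivity) (by positivity),
    Real.log_mul (by positivity) pYU.ne', Real.log_mul pXZ.ne' pXU.ne',
    Real.log_mul (by positivity) pXZU.ne', Real.log_mul pXY.ne' pU.ne'] at hlog
  linear_combination hlog - q (x, y, z, u) * hYZU_log
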